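/- Let L be a right Leibniz algebra over a field of characteristic ≠ 2 and B a two-sided ideal of L. Define B_0 = L, B_1 = B, and B_k = B^k + Es(B) for every integer k ≥ 2, where B^k is the k-th right power of B and Es(B) = B ∩ Ess(L). Then for every k ≥ 0, B_k is a two-sided ideal of L, and B_k ⊇ B_{k+1}. -/

import Mathlib

open Classical

/-- The binary product `mul` is bilinear over `F`. -/
def IsBilin (F : Type*) [Field F] {L : Type*} [AddCommGroup L] [Module F L]
    (mul : L → L → L) : Prop :=
  (∀ a b c : L, mul (a + b) c = mul a c + mul b c) ∧
  (∀ a b c : L, mul a (b + c) = mul a b + mul a c) ∧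
  (∀ (r : F) (a b : L), mul (r • a) b = r • mul a b) ∧
  (∀ (r : F) (a b : L), mul a (r • b) = r • mul a b)

/-- The (right) Leibniz identity: `a(bc) = (ab)c - (ac)b`. -/
def IsRightLeibniz {L : Type*} [AddCommGroup L] (mul : L → L → L) : Prop :=
  ∀ a b c : L, mul a (mul b c) = mul (mul a b) c - mul (mul a c) b

/-- The left Leibniz identity: `a(bc) = (ab)c + b(ac)`. -/
def IsLeftLeibniz {L : Type*} [AddCommGroup L] (mul : L → L → L) : Prop :=
  ∀ a b c : L, mul a (mul b c) = mul (mul a b) c + mul b (mul a c)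

/-- `B` is a two-sided ideal: `xb ∈ B` and `bx ∈ B` for all `x ∈ L`, `b ∈ B`. -/
def IsIdeal {F : Type*} [Field F] {L : Type*} [AddCommGroup L] [Module F L]
    (mul : L → L → L) (B : Submodule F L) : Prop :=
  ∀ (x b : L), b ∈ B → mul x b ∈ B ∧ mul b x ∈ B

/-- `Ess F mul`: the two-sided ideal of `L` generated by the squares `{xx : x ∈ L}`. -/
def Ess (F : Type*) [Field F] {L : Type*} [AddCommGroup L] [Module F L]
    (mul : L → L → L) : Submodule F L :=
  sInf {I : Submodule F L | (∀ x : L, mul x x ∈ I) ∧ IsIdeal mul I}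

/-- The two-sided ideal of `L` generated by a subspace `S`. -/
def idealClosure (F : Type*) [Field F] {L : Type*} [AddCommGroup L] [Module F L]
    (mul : L → L → L) (S : Submodule F L) : Submodule F L :=
  sInf {I : Submodule F L | S ≤ I ∧ IsIdeal mul I}

/-- Right powers: `B^0 = L` (convention), `B^1 = B`,
`B^{n+1} = span {bc : b ∈ B^n, c ∈ B}`. -/
def rpow (F : Type*) [Field F] {L : Type*} [AddCommGroup L] [Module F L]
    (mul : L → L → L) (B : Submodule F L) : ℕ → Submodule F L
  | 0 => ⊤
  | 1 => B
  | n + 2 => Submodule.span F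
      {x : L | ∃ b ∈ rpow F mul B (n + 1), ∃ c ∈ B, x = mul b c}

/-- Left powers: `^0B = L` (convention), `^1B = B`,
`^{n+1}B = span {bc : b ∈ B, c ∈ ^nB}`. -/
def lpow (F : Type*) [Field F] {L : Type*} [AddCommGroup L] [Module F L]
    (mul : L → L → L) (B : Submodule F L) : ℕ → Submodule F L
  | 0 => ⊤
  | 1 => B
  | n + 2 => Submodule.span F
      {x : L | ∃ b ∈ B, ∃ c ∈ lpow F mul B (n + 1), x = mul b c}

/-- The right-normed product `rightProd mul a [b₁, …, bₖ] = ((…(a b₁)…) bₖ)`,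
with all parentheses associated to the left. -/
def rightProd {L : Type*} (mul : L → L → L) : L → List L → L
  | a, [] => a
  | a, b :: l => rightProd mul (mul a b) l

/-- `D_{(L,k)}`: the span of all right-normed products `d a_k ⋯ a_1`
with `d ∈ D` and `a_i ∈ L`. -/
def rightMulSpan (F : Type*) [Field F] {L : Type*} [AddCommGroup L] [Module F L]
    (mul : L → L → L) (D : Submodule F L) (k : ℕ) : Submodule F L :=
  Submodule.span F
    {x : L | ∃ d ∈ D, ∃ l : List L, l.length = k ∧ x = rightProd mul d l}

/-- A formal nonassociative product (a word of elements of `L` parenthesized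
in an arbitrary way). -/
inductive PTree (L : Type*) where
  | leaf : L → PTree L
  | node : PTree L → PTree L → PTree L

/-- Evaluation of a parenthesized product in `L`. -/
def PTree.eval {L : Type*} (mul : L → L → L) : PTree L → L
  | .leaf a => a
  | .node s t => mul (PTree.eval mul s) (PTree.eval mul t)

/-- The list of factors of a parenthesized product, in order. -/
def PTree.leaves {L : Type*} : PTree L → List L
  | .leaf a => [a]
  | .node s t => s.leaves ++ t.leaves

/-- The length (number of factors) of a parenthesized product. -/
def PTree.length {L : Type*} (t : PTree L) : ℕ := t.leaves.length

/-- The weight of a parenthesized product with respect to `B`: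
the number of its factors lying in `B`. -/
noncomputable def PTree.weight {F : Type*} [Field F] {L : Type*} [AddCommGroup L]
    [Module F L] (B : Submodule F L) (t : PTree L) : ℕ :=
  t.leaves.countP (fun y => decide (y ∈ B))

/-- `B^{⟨n⟩}`: the span of all products of elements of `L` of weight at least `n`
with respect to `B`. -/
noncomputable def weightSpan (F : Type*) [Field F] {L : Type*} [AddCommGroup L]
    [Module F L] (mul : L → L → L) (B : Submodule F L) (n : ℕ) : Submodule F L :=
  Submodule.span F
    {x : L | ∃ t : PTree L, n ≤ PTree.weight B t ∧ x = PTree.eval mul t}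

/-- `B^{{n}}`: the span of all length-`n` products all of whose factors lie in `B`. -/
def lengthSpanIn (F : Type*) [Field F] {L : Type*} [AddCommGroup L] [Module F L]
    (mul : L → L → L) (B : Submodule F L) (n : ℕ) : Submodule F L :=
  Submodule.span F
    {x : L | ∃ t : PTree L, PTree.length t = n ∧ (∀ a ∈ PTree.leaves t, a ∈ B) ∧
      x = PTree.eval mul t}

/-- The sequence `B_0 = L`, `B_1 = B`, `B_k = B^k + Es(B)` for `k ≥ 2`. -/
def Bseq (F : Type*) [Field F] {L : Type*} [AddCommGroup L] [Module F L]
    (mul : L → L → L) (B : Submodule F L) : ℕ → Submodule F L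
  | 0 => ⊤
  | 1 => B
  | k + 2 => rpow F mul B (k + 2) ⊔ (B ⊓ Ess F mul)

/-!
With `B^0 = L`, the right powers form a multiplicative filtration, `B^m B^n ⊆ B^{m+n}`: for
`a ∈ B^m`, `b ∈ B^n`, `c ∈ B` the Leibniz identity writes `a(bc)` as `(ab)c - (ac)b`, which trades
a factor in `B^{n+1}` for factors in `B` and `B^n`. Taking `m = 0` or `n = 0`, each `B^k` is a
two-sided ideal, and `B_k = B^k + Es(B)` is a sum of two ideals, for `k = 0, 1` as well.
-/

section

variable {F : Type*} [Field F] {L : Type*} [AddCommGroup L] [Module F L] {mul : L → L → L}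

/-- A product satisfying `IsBilin`, bundled as a bilinear map, so that multiplication by a fixed
factor on either side is available as a linear map. -/
def IsBilin.toLinearMap (hbil : IsBilin F mul) : L →ₗ[F] L →ₗ[F] L :=
  LinearMap.mk₂ F mul hbil.1 hbil.2.2.1 hbil.2.1 hbil.2.2.2

theorem IsRightLeibniz.mul_mul (hleib : IsRightLeibniz mul) (a b c : L) :
    mul (mul a b) c = mul a (mul b c) + mul (mul a c) b := by
  rw [hleib, sub_add_cancel]

section Ideal

variable {A B : Submodule F L}

theorem isIdeal_sInf {S : Set (Submodule F L)} (hS : ∀ I ∈ S, IsIdeal mul I) :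
    IsIdeal mul (sInf S) := by
  intro x b hb
  simp only [Submodule.mem_sInf] at hb ⊢
  exact ⟨fun I hI => (hS I hI x b (hb I hI)).1, fun I hI => (hS I hI x b (hb I hI)).2⟩

theorem isIdeal_Ess : IsIdeal mul (Ess F mul) :=
  isIdeal_sInf fun _ hI => hI.2

theorem IsIdeal.inf (hA : IsIdeal mul A) (hB : IsIdeal mul B) : IsIdeal mul (A ⊓ B) :=
  fun x b hb => ⟨⟨(hA x b hb.1).1, (hB x b hb.2).1⟩, ⟨(hA x b hb.1).2, (hB x b hb.2).2⟩⟩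

theorem IsIdeal.sup (hbil : IsBilin F mul) (hA : IsIdeal mul A) (hB : IsIdeal mul B) :
    IsIdeal mul (A ⊔ B) := by
  intro x c hc
  obtain ⟨a, ha, b, hb, rfl⟩ := Submodule.mem_sup.1 hc
  rw [hbil.1, hbil.2.1]
  exact ⟨Submodule.add_mem_sup (hA x a ha).1 (hB x b hb).1,
    Submodule.add_mem_sup (hA x a ha).2 (hB x b hb).2⟩

end Ideal

section RightPowers

variable {B P : Submodule F L}

theorem rpow_add_two_le_iff {n : ℕ} :
    rpow F mul B (n + 2) ≤ P ↔ ∀ b ∈ rpow F mul B (n + 1), ∀ c ∈ B, mul b c ∈ P := by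
  rw [rpow, Submodule.span_le]
  constructor
  · exact fun h b hb c hc => h ⟨b, hb, c, hc, rfl⟩
  · rintro h _ ⟨b, hb, c, hc, rfl⟩
    exact h b hb c hc

theorem mul_mem_rpow_succ (hB : IsIdeal mul B) {n : ℕ} {b c : L} (hb : b ∈ rpow F mul B n)
    (hc : c ∈ B) : mul b c ∈ rpow F mul B (n + 1) :=
  match n with
  | 0 => (hB b c hc).1
  | _ + 1 => rpow_add_two_le_iff.1 le_rfl b hb c hc

theorem mul_mem_rpow_right (hbil : IsBilin F mul) (hleib : IsRightLeibniz mul)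
    (hB : IsIdeal mul B) {n : ℕ} {b : L} (x : L) (hb : b ∈ rpow F mul B n) :
    mul b x ∈ rpow F mul B n := by
  induction n using Nat.twoStepInduction generalizing b with
  | zero => exact Submodule.mem_top
  | one => exact (hB x b hb).2
  | more n _ ih =>
    suffices rpow F mul B (n + 2) ≤ (rpow F mul B (n + 2)).comap (hbil.toLinearMap.flip x) from
      this hb
    refine rpow_add_two_le_iff.2 fun b hb c hc => ?_
    change mul (mul b c) x ∈ rpow F mul B (n + 2)
    rw [hleib.mul_mul]
    exact add_mem (mul_mem_rpow_succ hB hb (hB x c hc).2) (mul_mem_rpow_succ hB (ih hb) hc)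

theorem mul_mem_rpow_add (hbil : IsBilin F mul) (hleib : IsRightLeibniz mul)
    (hB : IsIdeal mul B) {m n : ℕ} {a b : L} (ha : a ∈ rpow F mul B m)
    (hb : b ∈ rpow F mul B n) : mul a b ∈ rpow F mul B (m + n) := by
  induction n using Nat.twoStepInduction generalizing m a b with
  | zero => exact mul_mem_rpow_right hbil hleib hB b ha
  | one => exact mul_mem_rpow_succ hB ha hb
  | more n _ ih =>
    suffices rpow F mul B (n + 2) ≤ (rpow F mul B (m + (n + 2))).comap (hbil.toLinearMap a) from
      this hb
    refine rpow_add_two_le_iff.2 fun b hb c hc => ?_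
    change mul a (mul b c) ∈ rpow F mul B (m + (n + 2))
    have left_mem : mul (mul a b) c ∈ rpow F mul B (m + (n + 2)) :=
      mul_mem_rpow_succ hB (ih ha hb) hc
    have right_mem : mul (mul a c) b ∈ rpow F mul B (m + (n + 2)) := by
      rw [show m + (n + 2) = m + 1 + (n + 1) by lia]
      exact ih (mul_mem_rpow_succ hB ha hc) hb
    rw [hleib]
    exact sub_mem left_mem right_mem

theorem isIdeal_rpow (hbil : IsBilin F mul) (hleib : IsRightLeibniz mul)
    (hB : IsIdeal mul B) (n : ℕ) : IsIdeal mul (rpow F mul B n) := by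
  intro x b hb
  have hx : x ∈ rpow F mul B 0 := Submodule.mem_top
  exact ⟨Nat.zero_add n ▸ mul_mem_rpow_add hbil hleib hB hx hb,
    mul_mem_rpow_add hbil hleib hB hb hx⟩

theorem rpow_succ_le (hbil : IsBilin F mul) (hleib : IsRightLeibniz mul)
    (hB : IsIdeal mul B) (n : ℕ) : rpow F mul B (n + 1) ≤ rpow F mul B n :=
  match n with
  | 0 => le_top
  | n + 1 => rpow_add_two_le_iff.2 fun b hb c _ => (isIdeal_rpow hbil hleib hB (n + 1) c b hb).2

theorem Bseq_eq_rpow_sup (k : ℕ) : Bseq F mul B k = rpow F mul B k ⊔ (B ⊓ Ess F mul) :=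
  match k with
  | 0 => (top_sup_eq _).symm
  | 1 => sup_inf_self.symm
  | _ + 2 => rfl

end RightPowers

end

theorem Bseq_isIdeal_antitone_general
    {F : Type*} [Field F] {L : Type*} [AddCommGroup L] [Module F L] (mul : L → L → L)
    (hbil : IsBilin F mul) (hleib : IsRightLeibniz mul)
    (B : Submodule F L) (hB : IsIdeal mul B) :
    ∀ k : ℕ, IsIdeal mul (Bseq F mul B k) ∧
      Bseq F mul B (k + 1) ≤ Bseq F mul B k := by
  intro k
  rw [Bseq_eq_rpow_sup, Bseq_eq_rpow_sup]
  exact ⟨(isIdeal_rpow hbil hleib hB k).sup hbil (hB.inf isIdeal_Ess),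
    sup_le_sup_right (rpow_succ_le hbil hleib hB k) _⟩

/-- Each `B_k` is a two-sided ideal of `L` and `B_k ⊇ B_{k+1}`. -/
theorem Bseq_isIdeal_antitone
    {F : Type*} [Field F] {L : Type*} [AddCommGroup L] [Module F L]
    (h2 : (2 : F) ≠ 0) (mul : L → L → L)
    (hbil : IsBilin F mul) (hleib : IsRightLeibniz mul)
    (B : Submodule F L) (hB : IsIdeal mul B) :
    ∀ k : ℕ, IsIdeal mul (Bseq F mul B k) ∧
      Bseq F mul B (k + 1) ≤ Bseq F mul B k :=
  Bseq_isIdeal_antitone_general mul hbil hleib B hB
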